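/- arXiv:1409.3142 — 2 statements merged into one kernel-verified Lean document; each statement's English description precedes it below -/
import Mathlib

section
/- (Existence criterion) Assume: 𝔤 is finite-dimensional; ε : Ω^0 → ℝ is a linear map whose restriction to ker(d : Ω^0 → Ω^1) is a linear isomorphism onto ℝ; H^j_CE(𝔤) ⊗ H^{n+1−j}(Ω) = 0 for every j = 1,…,n; and the alternating cocycle c : 𝔤^{n+1} → ℝ, c(x_1,…,x_{n+1}) := ε(ι(v_{x_1}∧⋯∧v_{x_{n+1}})ω), is a d_𝔤-coboundary (i.e., c = d_𝔤ψ for some alternating ψ : 𝔤^n → ℝ). Then there exists a homotopy moment map (f_1,…,f_n) for ω. -/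
/-- Cartan calculus data over ℝ: a module `carrier` with graded pieces `deg i`
(`deg i = ⊥` for `i < 0`), a degree-`+1` differential `d` squaring to zero,
a real Lie algebra `X`, contractions `ι v` of degree `-1` depending linearly on `v`,
pairwise anticommuting, and satisfying the Cartan relation
`𝓛_v ∘ ι_w - ι_w ∘ 𝓛_v = ι_[v,w]` where `𝓛_v = d ∘ ι_v + ι_v ∘ d`. -/
structure CartanCalculus where
  carrier : Type
  [addCommGroup : AddCommGroup carrier]
  [module : Module ℝ carrier]
  deg : ℤ → Submodule ℝ carrier
  deg_neg : ∀ i : ℤ, i < 0 → deg i = ⊥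
  d : carrier →ₗ[ℝ] carrier
  d_deg : ∀ i : ℤ, ∀ a ∈ deg i, d a ∈ deg (i + 1)
  d_d : ∀ a : carrier, d (d a) = 0
  X : Type
  [lieRingX : LieRing X]
  [lieAlgebraX : LieAlgebra ℝ X]
  ι : X →ₗ[ℝ] carrier →ₗ[ℝ] carrier
  ι_deg : ∀ (v : X) (i : ℤ), ∀ a ∈ deg i, ι v a ∈ deg (i - 1)
  ι_ι : ∀ (v w : X) (a : carrier), ι v (ι w a) = - ι w (ι v a)
  cartan : ∀ (v w : X) (a : carrier),
      (d (ι v (ι w a)) + ι v (d (ι w a))) - ι w (d (ι v a) + ι v (d a)) = ι ⁅v, w⁆ a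

attribute [instance] CartanCalculus.addCommGroup CartanCalculus.module
  CartanCalculus.lieRingX CartanCalculus.lieAlgebraX

namespace CartanCalculus

/-- The Lie derivative `𝓛_v = d ∘ ι_v + ι_v ∘ d`. -/
def L (C : CartanCalculus) (v : C.X) : C.carrier →ₗ[ℝ] C.carrier :=
  C.d ∘ₗ C.ι v + C.ι v ∘ₗ C.d

/-- Iterated contraction: `iotaL [v₁, …, v_k] = ι_{v_k} ∘ ⋯ ∘ ι_{v₁}`, i.e. the
contraction `ι(v₁ ∧ ⋯ ∧ v_k)` (`ι_{v₁}` acts first). -/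
def iotaL (C : CartanCalculus) : List C.X → C.carrier →ₗ[ℝ] C.carrier
  | [] => LinearMap.id
  | v :: vs => (C.iotaL vs).comp (C.ι v)

end CartanCalculus

/-- Interpret a list as a `Fin k`-tuple (junk value `0` out of range). -/
def listToFun {α : Type} [Zero α] (k : ℕ) (l : List α) : Fin k → α :=
  fun m => l.getD m.val 0

/-- A map `𝔤^k → W` is multilinear. -/
def IsMultilinear {𝔤 : Type} [AddCommGroup 𝔤] [Module ℝ 𝔤] {W : Type}
    [AddCommGroup W] [Module ℝ W] {k : ℕ} (ψ : (Fin k → 𝔤) → W) : Prop :=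
  ∀ (x : Fin k → 𝔤) (i : Fin k),
    (∀ a b : 𝔤, ψ (Function.update x i (a + b))
        = ψ (Function.update x i a) + ψ (Function.update x i b)) ∧
    (∀ (c : ℝ) (a : 𝔤), ψ (Function.update x i (c • a)) = c • ψ (Function.update x i a))

/-- A map `𝔤^k → W` is alternating. -/
def IsAlternating {𝔤 : Type} {W : Type} [AddCommGroup W] {k : ℕ}
    (ψ : (Fin k → 𝔤) → W) : Prop :=
  ∀ (x : Fin k → 𝔤) (i j : Fin k), i ≠ j → x i = x j → ψ x = 0

/-- The Chevalley–Eilenberg differential of a `k`-cochain `ψ`: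
`(d_𝔤 ψ)(x₁,…,x_{k+1}) = Σ_{i<j} (-1)^{i+j} ψ([x_i,x_j], x₁, …, x̂_i, …, x̂_j, …, x_{k+1})`
(signs written for 1-based indices, as in the paper). -/
def dCE {𝔤 : Type} [LieRing 𝔤] [LieAlgebra ℝ 𝔤] {W : Type} [AddCommGroup W]
    [Module ℝ W] (k : ℕ) (ψ : (Fin k → 𝔤) → W) : (Fin (k + 1) → 𝔤) → W :=
  fun x => ∑ i : Fin (k + 1), ∑ j : Fin (k + 1),
    if (i : ℕ) < (j : ℕ) then
      ((-1 : ℝ) ^ ((i : ℕ) + (j : ℕ))) •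
        ψ (listToFun k (⁅x i, x j⁆ :: (((List.ofFn x).eraseIdx (j : ℕ)).eraseIdx (i : ℕ))))
    else 0

namespace CartanCalculus

/-- `σ_k(x₁,…,x_k) = ι(v_{x₁} ∧ ⋯ ∧ v_{x_k}) σ` where `v_x = ρ x`. -/
def lower (C : CartanCalculus) {𝔤 : Type} [LieRing 𝔤] [LieAlgebra ℝ 𝔤]
    (ρ : 𝔤 →ₗ⁅ℝ⁆ C.X) (k : ℕ) (σ : C.carrier) : (Fin k → 𝔤) → C.carrier :=
  fun x => C.iotaL (List.ofFn (fun i => ρ (x i))) σ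

/-- `F_k(x₁,…,x_k) = ι(v_{x₁} ∧ ⋯ ∧ v_{x_{k-1}}) (F x_k)`, with `F₀ := 0`. -/
def lowerF (C : CartanCalculus) {𝔤 : Type} [LieRing 𝔤] [LieAlgebra ℝ 𝔤]
    (ρ : 𝔤 →ₗ⁅ℝ⁆ C.X) (F : 𝔤 → C.carrier) : (k : ℕ) → (Fin k → 𝔤) → C.carrier
  | 0 => fun _ => 0
  | (k + 1) => fun x =>
      C.iotaL (List.ofFn (fun i : Fin k => ρ (x i.castSucc))) (F (x (Fin.last k)))

end CartanCalculus

/-- `ς(k) = -(-1)^{k(k+1)/2}`. -/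
def varsigma (k : ℕ) : ℝ := -((-1 : ℝ) ^ (k * (k + 1) / 2))

/-- A homotopy moment map for the invariant closed form `ω ∈ Ω^{n+1}`
(componentwise form of Def. 5.1 in [FRZ]): a family of alternating multilinear maps
`f_k : 𝔤^k → Ω^{n-k}` (`k = 1, …, n`) satisfying the moment map equations. -/
def IsMomentMap (C : CartanCalculus) {𝔤 : Type} [LieRing 𝔤] [LieAlgebra ℝ 𝔤]
    (ρ : 𝔤 →ₗ⁅ℝ⁆ C.X) (n : ℕ) (ω : C.carrier)
    (f : (k : ℕ) → (Fin k → 𝔤) → C.carrier) : Prop :=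
  (∀ k : ℕ, 1 ≤ k → k ≤ n →
      IsMultilinear (f k) ∧ IsAlternating (f k) ∧ ∀ x, f k x ∈ C.deg ((n : ℤ) - (k : ℤ))) ∧
  (∀ x : 𝔤, C.d (f 1 (fun _ => x)) = - C.ι (ρ x) ω) ∧
  (∀ k : ℕ, 2 ≤ k → k ≤ n → ∀ x : Fin k → 𝔤,
      (∑ i : Fin k, ∑ j : Fin k,
        if (i : ℕ) < (j : ℕ) then
          ((-1 : ℝ) ^ ((i : ℕ) + (j : ℕ) + 1)) •
            f (k - 1) (listToFun (k - 1)
              (⁅x i, x j⁆ :: (((List.ofFn x).eraseIdx (j : ℕ)).eraseIdx (i : ℕ))))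
        else 0)
      = C.d (f k x) + varsigma k • C.lower ρ k ω x) ∧
  (∀ x : Fin (n + 1) → 𝔤,
      (∑ i : Fin (n + 1), ∑ j : Fin (n + 1),
        if (i : ℕ) < (j : ℕ) then
          ((-1 : ℝ) ^ ((i : ℕ) + (j : ℕ) + 1)) •
            f n (listToFun n
              (⁅x i, x j⁆ :: (((List.ofFn x).eraseIdx (j : ℕ)).eraseIdx (i : ℕ))))
        else 0)
      = varsigma (n + 1) • C.lower ρ (n + 1) ω x)

/-- Iterated contraction lowers the degree by the number of vectors. -/
lemma CartanCalculus.iotaL_deg (C : CartanCalculus) (l : List C.X) (i : ℤ)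
    (a : C.carrier) (ha : a ∈ C.deg i) :
    C.iotaL l a ∈ C.deg (i - (l.length : ℤ)) := by
  induction l generalizing i a with
  | nil => simpa [CartanCalculus.iotaL] using ha
  | cons v vs ih =>
      have h1 : C.ι v a ∈ C.deg (i - 1) := C.ι_deg v i a ha
      have h2 := ih (i - 1) (C.ι v a) h1
      have heq : i - 1 - (vs.length : ℤ) = i - ((v :: vs).length : ℤ) := by
        simp only [List.length_cons]
        push_cast
        ring
      have h3 : C.iotaL (v :: vs) a = C.iotaL vs (C.ι v a) := rfl
      rw [h3, ← heq]
      exact h2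

/-- The full contraction of `ω ∈ Ω^{n+1}` by `n+1` vectors lands in `Ω^0`. -/
lemma CartanCalculus.lower_mem_deg_zero (C : CartanCalculus) {𝔤 : Type} [LieRing 𝔤]
    [LieAlgebra ℝ 𝔤] (ρ : 𝔤 →ₗ⁅ℝ⁆ C.X) (n : ℕ) (ω : C.carrier)
    (hω : ω ∈ C.deg ((n : ℤ) + 1)) (x : Fin (n + 1) → 𝔤) :
    C.lower ρ (n + 1) ω x ∈ C.deg 0 := by
  have h := C.iotaL_deg (List.ofFn (fun i => ρ (x i))) ((n : ℤ) + 1) ω hω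
  have heq : (n : ℤ) + 1 - ((List.ofFn (fun i : Fin (n + 1) => ρ (x i))).length : ℤ)
      = 0 := by
    simp
  show C.iotaL (List.ofFn (fun i => ρ (x i))) ω ∈ C.deg 0
  rw [← heq]
  exact h

/-- The cochain `c : 𝔤^{n+1} → ℝ`, `c(x₁,…,x_{n+1}) = ε(ι(v_{x₁}∧⋯∧v_{x_{n+1}})ω)`,
i.e. `(-1)^n ω_{n+1}` evaluated by `ε : Ω^0 → ℝ` (without the sign). -/
def obstructionCocycle (C : CartanCalculus) {𝔤 : Type} [LieRing 𝔤] [LieAlgebra ℝ 𝔤]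
    (ρ : 𝔤 →ₗ⁅ℝ⁆ C.X) (n : ℕ) (ω : C.carrier) (hω : ω ∈ C.deg ((n : ℤ) + 1))
    (ε : C.deg 0 →ₗ[ℝ] ℝ) : (Fin (n + 1) → 𝔤) → ℝ :=
  fun x => ε ⟨C.lower ρ (n + 1) ω x, C.lower_mem_deg_zero ρ n ω hω x⟩

/-!
Alternating maps on `𝔤` are linear maps on `⋀ 𝔤`, and `d_𝔤` is precomposition with the
Chevalley–Eilenberg boundary `∂` of `⋀ 𝔤`. For a closed invariant `ω` the signed contraction
`φ u = ± ι(u) ω` satisfies `d ∘ φ = φ ∘ ∂`, and the moment map equations say precisely that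
`d ∘ f + f ∘ ∂ = φ`, i.e. that `f` is a null-homotopy of the chain map `φ` in positive degrees.
Over a field such an `f` exists as soon as `φ` sends cycles to boundaries. For a cycle `z` of
degree `k ≤ n` this holds either because `H^k_CE(𝔤) = 0`, so that `z = ∂ w` and `φ z = d (φ w)`,
or because the closed element `φ z` is exact. For `k = n + 1` it means `φ z = 0`, which follows
from `ε (φ z) = ± ψ (∂ z) = 0`, and for `k > n + 1` it is trivial.
-/

section LinearAlgebra

variable {K V W : Type*} [DivisionRing K] [AddCommGroup V] [Module K V] [AddCommGroup W]
  [Module K W]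

theorem exists_linear_section_on_map (T : V →ₗ[K] W) (S : Submodule K V) :
    ∃ s : W →ₗ[K] V, (∀ w, s w ∈ S) ∧ ∀ w ∈ S.map T, T (s w) = w := by
  obtain ⟨g, hg⟩ := (T.submoduleMap S).exists_rightInverse_of_surjective
    (LinearMap.range_eq_top.mpr (T.submoduleMap_surjective S))
  obtain ⟨s, hs⟩ := g.exists_extend
  refine ⟨S.subtype ∘ₗ s, fun w => (s w).2, fun w hw => ?_⟩
  have hsw : s w = g ⟨w, hw⟩ := LinearMap.congr_fun hs ⟨w, hw⟩
  rw [LinearMap.comp_apply, hsw]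
  exact congrArg Subtype.val (LinearMap.congr_fun hg ⟨w, hw⟩)

/- With degreewise sections `s` of `δ` and `h` of `d`, the map `q = 1 - s δ - δ s` takes values in
the cycles and vanishes on boundaries, so `f = h φ q + φ s` is the required homotopy. -/
theorem exists_nullHomotopy {δ : V →ₗ[K] V} {d : W →ₗ[K] W} {φ : V →ₗ[K] W}
    {A : ℕ → Submodule K V} {B : ℕ → Submodule K W}
    (hδA : ∀ k, ∀ u ∈ A (k + 1), δ u ∈ A k) (hδδ : ∀ u, δ (δ u) = 0)
    (hφA : ∀ k, ∀ u ∈ A (k + 1), φ u ∈ B k) (hdφ : ∀ u, d (φ u) = φ (δ u))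
    (hcycle : ∀ k, ∀ z ∈ A (k + 1), δ z = 0 → φ z ∈ (B (k + 1)).map d) :
    ∃ f : ℕ → V →ₗ[K] W, (∀ k u, f k u ∈ B k) ∧
      ∀ k, ∀ u ∈ A (k + 1), d (f (k + 1) u) + f k (δ u) = φ u := by
  choose s hsA hs using fun k => exists_linear_section_on_map δ (A (k + 1))
  choose h hhB hh using fun k => exists_linear_section_on_map d (B k)
  have δ_s_δ {k : ℕ} {u : V} (hu : u ∈ A (k + 1)) : δ (s k (δ u)) = δ u := hs k _ ⟨u, hu, rfl⟩
  let q (k : ℕ) : V →ₗ[K] V := LinearMap.id - s (k - 1) ∘ₗ δ - δ ∘ₗ s k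
  have q_apply (k : ℕ) (u : V) : q k u = u - s (k - 1) (δ u) - δ (s k u) := rfl
  refine ⟨fun k => h k ∘ₗ φ ∘ₗ q k + φ ∘ₗ s k,
    fun k u => add_mem (hhB k _) (hφA k _ (hsA k u)), fun k u hu => ?_⟩
  have q_boundary : q k (δ u) = 0 := by
    rw [q_apply, hδδ, map_zero, sub_zero, δ_s_δ hu, sub_self]
  have q_mem : q (k + 1) u ∈ A (k + 1) :=
    sub_mem (sub_mem hu (hsA k _)) (hδA _ _ (hsA (k + 1) u))
  have δ_q : δ (q (k + 1) u) = 0 := by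
    rw [q_apply, Nat.add_sub_cancel, map_sub, map_sub, δ_s_δ hu, hδδ, sub_self, sub_zero]
  have d_h : d (h (k + 1) (φ (q (k + 1) u))) = φ (q (k + 1) u) :=
    hh (k + 1) _ (hcycle k _ q_mem δ_q)
  simp only [LinearMap.add_apply, LinearMap.comp_apply, map_add, d_h, hdφ, q_boundary, map_zero]
  simp only [q_apply, Nat.add_sub_cancel, map_sub]
  abel

end LinearAlgebra

section ExteriorAlgebra

open ExteriorAlgebra

variable {R M N : Type*} [CommRing R] [AddCommGroup M] [Module R M] [AddCommGroup N] [Module R N]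

theorem exteriorAlgebra_linearMap_ext {F G : ExteriorAlgebra R M →ₗ[R] N} (one : F 1 = G 1)
    (ι_mul : ∀ m u, F u = G u → F (ι R m * u) = G (ι R m * u)) : F = G := by
  refine LinearMap.ext fun u => ?_
  induction u using CliffordAlgebra.left_induction with
  | algebraMap r => rw [Algebra.algebraMap_eq_smul_one, map_smul, map_smul, one]
  | add u v hu hv => rw [map_add, map_add, hu, hv]
  | ι_mul u m hu => exact ι_mul m u hu

theorem ιMulti_mem_exteriorPower (k : ℕ) (x : Fin k → M) : ιMulti R k x ∈ ⋀[R]^k M :=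
  ιMulti_range R k ⟨x, rfl⟩

theorem exteriorPower_le_of_ιMulti_mem {k : ℕ} {S : Submodule R (ExteriorAlgebra R M)}
    (h : ∀ x : Fin k → M, ιMulti R k x ∈ S) : ⋀[R]^k M ≤ S := by
  rw [← ιMulti_span_fixedDegree, Submodule.span_le]
  exact Set.range_subset_iff.mpr h

theorem eqOn_exteriorPower_of_eq_ιMulti {k : ℕ} {F G : ExteriorAlgebra R M →ₗ[R] N}
    (h : ∀ x : Fin k → M, F (ιMulti R k x) = G (ιMulti R k x)) {u : ExteriorAlgebra R M}
    (hu : u ∈ ⋀[R]^k M) : F u = G u :=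
  exteriorPower_le_of_ιMulti_mem (S := LinearMap.eqLocus F G) h hu

theorem ι_mul_ι_mul_self (x : M) (u : ExteriorAlgebra R M) : ι R x * (ι R x * u) = 0 := by
  rw [← mul_assoc, ι_sq_zero, zero_mul]

theorem ι_mul_ι_mul_swap (x y : M) (u : ExteriorAlgebra R M) :
    ι R x * (ι R y * u) = -(ι R y * (ι R x * u)) := by
  rw [← mul_assoc, ← mul_assoc, ← neg_mul, eq_neg_of_add_eq_zero_left (ι_add_mul_swap x y)]

variable (R) in
/-- The wedge product `x₁ ∧ ⋯ ∧ x_k` of a list of vectors. It is `ιMulti` for tuples given as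
lists, the form in which `dCE` removes entries. -/
def listWedge (l : List M) : ExteriorAlgebra R M := (l.map (ι R)).prod

@[simp]
theorem listWedge_nil : listWedge R ([] : List M) = 1 := rfl

@[simp]
theorem listWedge_cons (y : M) (l : List M) : listWedge R (y :: l) = ι R y * listWedge R l :=
  List.prod_cons

theorem listWedge_ofFn {k : ℕ} (x : Fin k → M) : listWedge R (List.ofFn x) = ιMulti R k x := by
  rw [listWedge, ιMulti_apply, List.map_ofFn, Function.comp_def]

theorem ι_mul_listWedge (y : M) (l : List M) :
    ι R y * listWedge R l = (-1 : R) ^ l.length • (listWedge R l * ι R y) := by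
  induction l with
  | nil => simp
  | cons z l ih =>
    rw [listWedge_cons, ι_mul_ι_mul_swap, ih, List.length_cons, pow_succ, mul_neg_one, neg_smul,
      mul_smul_comm, mul_assoc]

theorem ιMulti_listToFun {M : Type} [AddCommGroup M] [Module R M] {k : ℕ} {l : List M}
    (hl : l.length = k) : ιMulti R k (listToFun k l) = listWedge R l := by
  subst hl
  rw [← listWedge_ofFn]
  congr 1
  exact List.ext_getElem (by simp) fun i _ hi => by simp [listToFun, hi]

end ExteriorAlgebra

section ChevalleyEilenbergBoundary

open ExteriorAlgebra

variable {R L : Type*} [CommRing R] [LieRing L] [LieAlgebra R L]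

variable (R L) in
/-- The adjoint action of `L` on `⋀ L`: `exteriorAd R L x` is the derivation extending `ad x`. It is
built by recursion on `ι R y * u`, simultaneously for all `x` so that linearity in `x` is
automatic. -/
noncomputable def exteriorAd : L →ₗ[R] ExteriorAlgebra R L →ₗ[R] ExteriorAlgebra R L :=
  (CliffordAlgebra.foldr' (0 : QuadraticForm R L)
    (LinearMap.mk₂ R
      (fun y (p : ExteriorAlgebra R L × (L →ₗ[R] ExteriorAlgebra R L)) =>
        LinearMap.mulRight R p.1 ∘ₗ ι R ∘ₗ (LieModule.toEnd R L L : L →ₗ[R] L →ₗ[R] L).flip y +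
          LinearMap.mulLeft R (ι R y) ∘ₗ p.2)
      (fun y z p => by
        ext x
        simp only [map_add, LinearMap.add_apply, LinearMap.comp_apply, LinearMap.mulRight_apply,
          LinearMap.mulLeft_apply, add_mul]
        abel)
      (fun c y p => by ext x; simp)
      (fun y p q => by
        ext x
        simp only [Prod.fst_add, Prod.snd_add, LinearMap.add_apply, LinearMap.comp_apply,
          LinearMap.mulRight_apply, LinearMap.mulLeft_apply, mul_add]
        abel)
      (fun c y p => by ext x; simp))
    (fun y u T => by
      ext x
      change ι R ⁅x, y⁆ * (ι R y * u) + ι R y * (ι R ⁅x, y⁆ * u + ι R y * T x) = (0 : R) • T x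
      rw [ι_mul_ι_mul_swap, mul_add, ι_mul_ι_mul_self, add_zero, neg_add_cancel, zero_smul])
    0).flip

@[simp]
theorem exteriorAd_one (x : L) : exteriorAd R L x 1 = 0 := by
  rw [← map_one (algebraMap R (ExteriorAlgebra R L)), exteriorAd, LinearMap.flip_apply,
    CliffordAlgebra.foldr'_algebraMap, smul_zero, LinearMap.zero_apply]

@[simp]
theorem exteriorAd_ι_mul (x y : L) (u : ExteriorAlgebra R L) :
    exteriorAd R L x (ι R y * u) = ι R ⁅x, y⁆ * u + ι R y * exteriorAd R L x u :=
  LinearMap.congr_fun (CliffordAlgebra.foldr'_ι_mul (0 : QuadraticForm R L) _ _ 0 y u) x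

theorem exteriorAd_lie (x y : L) :
    exteriorAd R L ⁅x, y⁆ =
      exteriorAd R L x ∘ₗ exteriorAd R L y - exteriorAd R L y ∘ₗ exteriorAd R L x :=
  exteriorAlgebra_linearMap_ext (by simp) fun z u ih => by
    simp only [LinearMap.sub_apply, LinearMap.comp_apply] at ih ⊢
    simp only [exteriorAd_ι_mul, map_add, map_sub, ih, lie_lie, sub_mul, mul_sub]
    abel

variable (R L) in
/-- The Chevalley–Eilenberg boundary on `⋀ L` with trivial coefficients, determined by
`∂ 1 = 0` and `∂ (y ∧ u) = - ad_y u - y ∧ ∂ u`. The sign makes `dCE` precomposition with `∂`. -/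
noncomputable def ceBoundary : ExteriorAlgebra R L →ₗ[R] ExteriorAlgebra R L :=
  CliffordAlgebra.foldr' (0 : QuadraticForm R L)
    (LinearMap.mk₂ R
      (fun y (p : ExteriorAlgebra R L × ExteriorAlgebra R L) =>
        -exteriorAd R L y p.1 - ι R y * p.2)
      (fun y z p => by simp only [map_add, LinearMap.add_apply, add_mul]; abel)
      (fun c y p => by simp [smul_sub])
      (fun y p q => by simp only [Prod.fst_add, Prod.snd_add, map_add, mul_add]; abel)
      (fun c y p => by simp [smul_sub]))
    (fun y u v => by simp [mul_sub, ι_mul_ι_mul_self])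
    0

@[simp]
theorem ceBoundary_one : ceBoundary R L 1 = 0 := by
  rw [← map_one (algebraMap R (ExteriorAlgebra R L)), ceBoundary,
    CliffordAlgebra.foldr'_algebraMap, smul_zero]

@[simp]
theorem ceBoundary_ι_mul (y : L) (u : ExteriorAlgebra R L) :
    ceBoundary R L (ι R y * u) = -exteriorAd R L y u - ι R y * ceBoundary R L u :=
  CliffordAlgebra.foldr'_ι_mul (0 : QuadraticForm R L) _ _ 0 y u

theorem exteriorAd_comp_ceBoundary (x : L) :
    exteriorAd R L x ∘ₗ ceBoundary R L = ceBoundary R L ∘ₗ exteriorAd R L x :=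
  exteriorAlgebra_linearMap_ext (by simp) fun y u ih => by
    simp only [LinearMap.comp_apply] at ih
    simp only [LinearMap.comp_apply, exteriorAd_ι_mul, ceBoundary_ι_mul, map_add, map_sub, map_neg,
      ih, exteriorAd_lie, LinearMap.sub_apply]
    abel

theorem ceBoundary_comp_ceBoundary : ceBoundary R L ∘ₗ ceBoundary R L = 0 :=
  exteriorAlgebra_linearMap_ext (by simp) fun y u ih => by
    have ad_comm := LinearMap.congr_fun (exteriorAd_comp_ceBoundary (R := R) y) u
    simp only [LinearMap.comp_apply, LinearMap.zero_apply] at ih ad_comm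
    simp [ih, ad_comm]

theorem ceBoundary_ceBoundary (u : ExteriorAlgebra R L) :
    ceBoundary R L (ceBoundary R L u) = 0 :=
  LinearMap.congr_fun ceBoundary_comp_ceBoundary u

theorem exteriorAd_listWedge_ofFn {k : ℕ} (y : L) (x : Fin k → L) :
    exteriorAd R L y (listWedge R (List.ofFn x)) =
      ∑ j : Fin k, (-1 : R) ^ (j : ℕ) • listWedge R (⁅y, x j⁆ :: (List.ofFn x).eraseIdx j) := by
  induction k with
  | zero => simp
  | succ k ih =>
    rw [List.ofFn_succ, listWedge_cons, exteriorAd_ι_mul, ih, Fin.sum_univ_succ, Finset.mul_sum]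
    congr 1
    · simp
    · refine Finset.sum_congr rfl fun j _ => ?_
      simp only [Fin.val_succ, List.eraseIdx_cons_succ, listWedge_cons, mul_smul_comm, pow_succ]
      rw [ι_mul_ι_mul_swap]
      simp

theorem ceBoundary_listWedge_ofFn {k : ℕ} (x : Fin k → L) :
    ceBoundary R L (listWedge R (List.ofFn x)) =
      ∑ i : Fin k, ∑ j : Fin k,
        if (i : ℕ) < (j : ℕ) then
          (-1 : R) ^ ((i : ℕ) + (j : ℕ)) •
            listWedge R (⁅x i, x j⁆ :: ((List.ofFn x).eraseIdx j).eraseIdx i)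
        else 0 := by
  induction k with
  | zero => simp
  | succ k ih =>
    rw [List.ofFn_succ, listWedge_cons, ceBoundary_ι_mul, ih, exteriorAd_listWedge_ofFn,
      Fin.sum_univ_succ, sub_eq_add_neg]
    congr 1
    · rw [Fin.sum_univ_succ, ← Finset.sum_neg_distrib]
      simp [pow_succ]
    · rw [Finset.mul_sum, ← Finset.sum_neg_distrib]
      refine Finset.sum_congr rfl fun i _ => ?_
      rw [Fin.sum_univ_succ, Finset.mul_sum, ← Finset.sum_neg_distrib, if_neg (by simp), zero_add]
      refine Finset.sum_congr rfl fun j _ => ?_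
      simp only [Fin.val_succ, List.eraseIdx_cons_succ, listWedge_cons, add_lt_add_iff_right]
      split_ifs
      · rw [ι_mul_ι_mul_swap, mul_smul_comm, smul_neg]
        congr 2
        ring
      · simp

end ChevalleyEilenbergBoundary

section Cochains

open ExteriorAlgebra

variable {𝔤 : Type} [LieRing 𝔤] [LieAlgebra ℝ 𝔤] {W : Type} [AddCommGroup W] [Module ℝ W]

theorem exists_linearMap_ιMulti_eq {k : ℕ} {ψ : (Fin k → 𝔤) → W} (hψ_mul : IsMultilinear ψ)
    (hψ_alt : IsAlternating ψ) :
    ∃ Ψ : ExteriorAlgebra ℝ 𝔤 →ₗ[ℝ] W, ∀ x, Ψ (ιMulti ℝ k x) = ψ x := by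
  let ψ' : 𝔤 [⋀^Fin k]→ₗ[ℝ] W :=
    { toFun := ψ
      map_update_add' := fun x i a b => by convert (hψ_mul x i).1 a b
      map_update_smul' := fun x i c a => by convert (hψ_mul x i).2 c a
      map_eq_zero_of_eq' := fun x i j hx hij => hψ_alt x i j hij hx }
  refine ⟨liftAlternating (Pi.single k ψ'), fun x => ?_⟩
  rw [liftAlternating_apply_ιMulti, Pi.single_eq_same]
  rfl

theorem isMultilinear_linearMap_ιMulti (k : ℕ) (Ψ : ExteriorAlgebra ℝ 𝔤 →ₗ[ℝ] W) :
    IsMultilinear fun x => Ψ (ιMulti ℝ k x) := fun x i =>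
  ⟨fun a b => by simp only [AlternatingMap.map_update_add, map_add],
    fun c a => by simp only [AlternatingMap.map_update_smul, map_smul]⟩

theorem isAlternating_linearMap_ιMulti (k : ℕ) (Ψ : ExteriorAlgebra ℝ 𝔤 →ₗ[ℝ] W) :
    IsAlternating fun x => Ψ (ιMulti ℝ k x) := fun x i j hij hx => by
  simp only [(ιMulti ℝ k).map_eq_zero_of_eq x hx hij, map_zero]

theorem length_cons_eraseIdx_eraseIdx_ofFn {α : Type*} {k : ℕ} (x : Fin (k + 1) → α)
    {i j : Fin (k + 1)} (hij : (i : ℕ) < j) (y : α) :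
    (y :: ((List.ofFn x).eraseIdx j).eraseIdx i).length = k := by
  grind [List.length_eraseIdx]

theorem ceBoundary_ιMulti {k : ℕ} (x : Fin (k + 1) → 𝔤) :
    ceBoundary ℝ 𝔤 (ιMulti ℝ (k + 1) x) = dCE k (ιMulti ℝ k) x := by
  rw [← listWedge_ofFn, ceBoundary_listWedge_ofFn, dCE]
  refine Finset.sum_congr rfl fun i _ => Finset.sum_congr rfl fun j _ => ?_
  split_ifs with hij
  · rw [ιMulti_listToFun (length_cons_eraseIdx_eraseIdx_ofFn x hij _)]
  · rfl

theorem dCE_linearMap_ιMulti {k : ℕ} (Ψ : ExteriorAlgebra ℝ 𝔤 →ₗ[ℝ] W) (x : Fin (k + 1) → 𝔤) :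
    dCE k (fun y => Ψ (ιMulti ℝ k y)) x = Ψ (ceBoundary ℝ 𝔤 (ιMulti ℝ (k + 1) x)) := by
  rw [ceBoundary_ιMulti, dCE, dCE]
  simp only [map_sum, apply_ite Ψ, map_smul, map_zero]

theorem neg_dCE (k : ℕ) (ψ : (Fin k → 𝔤) → W) (x : Fin (k + 1) → 𝔤) :
    -dCE k ψ x = ∑ i : Fin (k + 1), ∑ j : Fin (k + 1),
      if (i : ℕ) < (j : ℕ) then
        ((-1 : ℝ) ^ ((i : ℕ) + (j : ℕ) + 1)) •
          ψ (listToFun k (⁅x i, x j⁆ :: (((List.ofFn x).eraseIdx (j : ℕ)).eraseIdx (i : ℕ))))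
      else 0 := by
  simp only [dCE, ← Finset.sum_neg_distrib]
  refine Finset.sum_congr rfl fun i _ => Finset.sum_congr rfl fun j _ => ?_
  split_ifs
  · rw [pow_succ, mul_neg_one, neg_smul]
  · rw [neg_zero]

theorem ceBoundary_mem_exteriorPower {k : ℕ} {u : ExteriorAlgebra ℝ 𝔤}
    (hu : u ∈ ⋀[ℝ]^(k + 1) 𝔤) : ceBoundary ℝ 𝔤 u ∈ ⋀[ℝ]^k 𝔤 := by
  refine exteriorPower_le_of_ιMulti_mem (S := (⋀[ℝ]^k 𝔤).comap (ceBoundary ℝ 𝔤)) (fun x => ?_) hu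
  rw [Submodule.mem_comap, ceBoundary_ιMulti, dCE]
  refine Submodule.sum_mem _ fun i _ => Submodule.sum_mem _ fun j _ => ?_
  split_ifs
  · exact Submodule.smul_mem _ _ (ιMulti_mem_exteriorPower k _)
  · exact zero_mem _

variable (𝔤) in
/-- The vanishing of `H^{j+1}_CE(𝔤)`: every alternating cocycle of degree `j + 1` is a coboundary.
The degree is shifted by one so that the primitive has degree `j`. -/
def IsCEAcyclicSucc (j : ℕ) : Prop :=
  ∀ ψ : (Fin (j + 1) → 𝔤) → ℝ, IsMultilinear ψ → IsAlternating ψ →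
    (∀ x : Fin (j + 2) → 𝔤, dCE (j + 1) ψ x = 0) →
    ∃ χ : (Fin j → 𝔤) → ℝ, IsMultilinear χ ∧ IsAlternating χ ∧
      ∀ x : Fin (j + 1) → 𝔤, dCE j χ x = ψ x

/- A functional vanishing on the boundaries is a cocycle, hence a coboundary, hence vanishes on the
cycles; functionals separate points from subspaces. -/
theorem IsCEAcyclicSucc.exists_ceBoundary_eq {j : ℕ} (hacyclic : IsCEAcyclicSucc 𝔤 j)
    {z : ExteriorAlgebra ℝ 𝔤} (hz : z ∈ ⋀[ℝ]^(j + 1) 𝔤) (hcycle : ceBoundary ℝ 𝔤 z = 0) :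
    ∃ w ∈ ⋀[ℝ]^(j + 2) 𝔤, ceBoundary ℝ 𝔤 w = z := by
  by_contra hboundary
  obtain ⟨Ψ, hΨz, hΨ⟩ := Submodule.exists_le_ker_of_notMem
    (p := (⋀[ℝ]^(j + 2) 𝔤).map (ceBoundary ℝ 𝔤)) hboundary
  have hcocycle (x : Fin (j + 2) → 𝔤) : dCE (j + 1) (fun y => Ψ (ιMulti ℝ (j + 1) y)) x = 0 := by
    rw [dCE_linearMap_ιMulti]
    exact hΨ ⟨_, ιMulti_mem_exteriorPower _ x, rfl⟩
  obtain ⟨χ, hχ_mul, hχ_alt, hχ⟩ := hacyclic _ (isMultilinear_linearMap_ιMulti (j + 1) Ψ)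
    (isAlternating_linearMap_ιMulti (j + 1) Ψ) hcocycle
  obtain ⟨Χ, hΧ⟩ := exists_linearMap_ιMulti_eq hχ_mul hχ_alt
  obtain rfl : (fun y => Χ (ιMulti ℝ j y)) = χ := funext hΧ
  have hΨ_eq : Ψ z = (Χ ∘ₗ ceBoundary ℝ 𝔤) z :=
    eqOn_exteriorPower_of_eq_ιMulti (fun x => (hχ x).symm.trans (dCE_linearMap_ιMulti Χ x)) hz
  exact hΨz (by rw [hΨ_eq, LinearMap.comp_apply, hcycle, map_zero])

end Cochains

theorem varsigma_succ (k : ℕ) : varsigma (k + 1) = (-1) ^ (k + 1) * varsigma k := by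
  have htriangle : (k + 1) * (k + 1 + 1) / 2 = k * (k + 1) / 2 + (k + 1) := by
    simpa [mul_comm] using Nat.triangle_succ (k + 1)
  rw [varsigma, varsigma, htriangle, pow_add]
  ring

namespace CartanCalculus

open ExteriorAlgebra (ιMulti)

/-- The vanishing of `H^i(Ω)`: every closed element of `Ω^i` is exact. -/
def IsAcyclicAt (C : CartanCalculus) (i : ℤ) : Prop :=
  ∀ a : C.carrier, a ∈ C.deg i → C.d a = 0 → ∃ b : C.carrier, b ∈ C.deg (i - 1) ∧ C.d b = a

theorem ι_self (C : CartanCalculus) (v : C.X) (a : C.carrier) : C.ι v (C.ι v a) = 0 := by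
  have := IsAddTorsionFree.of_isTorsionFree ℝ C.carrier
  exact self_eq_neg.mp (C.ι_ι v v a)

theorem L_ι (C : CartanCalculus) (v w : C.X) (a : C.carrier) :
    C.L v (C.ι w a) = C.ι ⁅v, w⁆ a + C.ι w (C.L v a) :=
  sub_eq_iff_eq_add.mp (C.cartan v w a)

variable (C : CartanCalculus) {𝔤 : Type} [LieRing 𝔤] [LieAlgebra ℝ 𝔤] (ρ : 𝔤 →ₗ⁅ℝ⁆ C.X)

/-- The signed contraction `x₁ ∧ ⋯ ∧ x_k ↦ (-1)^k ι_{v_{x₁}} ∘ ⋯ ∘ ι_{v_{x_k}}`, as an algebra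
morphism on `⋀ 𝔤`. The sign makes contraction of a closed invariant form a chain map, see
`d_contraction`. -/
noncomputable def contraction : ExteriorAlgebra ℝ 𝔤 →ₐ[ℝ] Module.End ℝ C.carrier :=
  ExteriorAlgebra.lift ℝ ⟨-(C.ι ∘ₗ (ρ : 𝔤 →ₗ[ℝ] C.X)), fun x => by
    ext a
    simp [C.ι_self]⟩

theorem contraction_ι (x : 𝔤) (a : C.carrier) :
    C.contraction ρ (ExteriorAlgebra.ι ℝ x) a = -C.ι (ρ x) a := by
  rw [contraction, ExteriorAlgebra.lift_ι_apply]
  rfl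

theorem contraction_ι_mul (x : 𝔤) (u : ExteriorAlgebra ℝ 𝔤) (a : C.carrier) :
    C.contraction ρ (ExteriorAlgebra.ι ℝ x * u) a = -C.ι (ρ x) (C.contraction ρ u a) := by
  rw [map_mul, Module.End.mul_apply, contraction_ι]

/-- The linear map `u ↦ C.contraction ρ u a`. For `a = ω` it is the chain map whose
null-homotopies are the homotopy moment maps. -/
noncomputable def contractionAt (a : C.carrier) : ExteriorAlgebra ℝ 𝔤 →ₗ[ℝ] C.carrier :=
  LinearMap.applyₗ a ∘ₗ (C.contraction ρ).toLinearMap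

theorem contractionAt_apply (a : C.carrier) (u : ExteriorAlgebra ℝ 𝔤) :
    C.contractionAt ρ a u = C.contraction ρ u a := rfl

theorem L_contraction (x : 𝔤) (u : ExteriorAlgebra ℝ 𝔤) (a : C.carrier) :
    C.L (ρ x) (C.contraction ρ u a) =
      C.contraction ρ (exteriorAd ℝ 𝔤 x u) a + C.contraction ρ u (C.L (ρ x) a) := by
  suffices C.L (ρ x) ∘ₗ C.contractionAt ρ a =
      C.contractionAt ρ a ∘ₗ exteriorAd ℝ 𝔤 x + C.contractionAt ρ (C.L (ρ x) a) from
    LinearMap.congr_fun this u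
  refine exteriorAlgebra_linearMap_ext (by simp [contractionAt_apply]) fun y u ih => ?_
  simp only [LinearMap.add_apply, LinearMap.comp_apply, contractionAt_apply] at ih ⊢
  simp only [contraction_ι_mul, exteriorAd_ι_mul, map_neg, map_add, LinearMap.add_apply, L_ι, ih,
    LieHom.map_lie]
  abel

theorem d_contraction {ω : C.carrier} (hcl : C.d ω = 0) (hinv : ∀ x : 𝔤, C.L (ρ x) ω = 0)
    (u : ExteriorAlgebra ℝ 𝔤) :
    C.d (C.contraction ρ u ω) = C.contraction ρ (ceBoundary ℝ 𝔤 u) ω := by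
  suffices C.d ∘ₗ C.contractionAt ρ ω = C.contractionAt ρ ω ∘ₗ ceBoundary ℝ 𝔤 from
    LinearMap.congr_fun this u
  refine exteriorAlgebra_linearMap_ext (by simp [contractionAt_apply, hcl]) fun y u ih => ?_
  simp only [LinearMap.comp_apply, contractionAt_apply] at ih ⊢
  have d_ι : C.d (C.ι (ρ y) (C.contraction ρ u ω)) =
      C.L (ρ y) (C.contraction ρ u ω) - C.ι (ρ y) (C.d (C.contraction ρ u ω)) :=
    eq_sub_of_add_eq rfl
  simp only [contraction_ι_mul, ceBoundary_ι_mul, map_neg, map_sub, LinearMap.sub_apply,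
    LinearMap.neg_apply, d_ι, ih, L_contraction, hinv, map_zero, add_zero]
  abel

theorem contraction_listWedge (l : List 𝔤) (a : C.carrier) :
    C.contraction ρ (listWedge ℝ l) a = -(varsigma l.length • C.iotaL (l.map ρ) a) := by
  induction l generalizing a with
  | nil => simp [varsigma, iotaL]
  | cons y l ih =>
    rw [listWedge_cons, ι_mul_listWedge, map_smul, LinearMap.smul_apply, map_mul,
      Module.End.mul_apply, contraction_ι, map_neg, ih, List.length_cons, varsigma_succ, pow_succ]
    simp only [neg_neg, smul_smul, mul_neg_one, neg_mul, neg_smul]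
    rfl

theorem contraction_ιMulti {k : ℕ} (x : Fin k → 𝔤) (a : C.carrier) :
    C.contraction ρ (ιMulti ℝ k x) a = -(varsigma k • C.lower ρ k a x) := by
  rw [← listWedge_ofFn, contraction_listWedge, List.length_ofFn, List.map_ofFn]
  rfl

theorem contraction_mem_deg {m : ℤ} {a : C.carrier} (ha : a ∈ C.deg m) {k : ℕ}
    {u : ExteriorAlgebra ℝ 𝔤} (hu : u ∈ ⋀[ℝ]^k 𝔤) : C.contraction ρ u a ∈ C.deg (m - k) := by
  refine exteriorPower_le_of_ιMulti_mem (S := (C.deg (m - k)).comap (C.contractionAt ρ a))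
    (fun x => ?_) hu
  rw [Submodule.mem_comap, contractionAt_apply, contraction_ιMulti]
  have hlower := C.iotaL_deg (List.ofFn fun i => ρ (x i)) m a ha
  rw [List.length_ofFn] at hlower
  exact neg_mem (Submodule.smul_mem _ _ hlower)

theorem contraction_eq_zero_of_obstructionCocycle_eq_dCE {n : ℕ} {ω : C.carrier}
    (hω : ω ∈ C.deg ((n : ℤ) + 1)) (hcl : C.d ω = 0) (hinv : ∀ x : 𝔤, C.L (ρ x) ω = 0)
    {ε : C.deg 0 →ₗ[ℝ] ℝ}
    (hεinj : ∀ a : C.deg 0, C.d (a : C.carrier) = 0 → ε a = 0 → (a : C.carrier) = 0)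
    {ψ : (Fin n → 𝔤) → ℝ} (hψ_mul : IsMultilinear ψ) (hψ_alt : IsAlternating ψ)
    (hψ : ∀ x, dCE n ψ x = obstructionCocycle C ρ n ω hω ε x)
    {z : ExteriorAlgebra ℝ 𝔤} (hz : z ∈ ⋀[ℝ]^(n + 1) 𝔤) (hcycle : ceBoundary ℝ 𝔤 z = 0) :
    C.contraction ρ z ω = 0 := by
  obtain ⟨Ψ, hΨ⟩ := exists_linearMap_ιMulti_eq hψ_mul hψ_alt
  obtain rfl : (fun y => Ψ (ιMulti ℝ n y)) = ψ := funext hΨ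
  obtain ⟨ε', hε'⟩ := ε.exists_extend
  have ε'_eq (a : C.deg 0) : ε' a = ε a := LinearMap.congr_fun hε' a
  have hε'_contraction : (ε' ∘ₗ C.contractionAt ρ ω) z =
      (-(varsigma (n + 1) • Ψ ∘ₗ ceBoundary ℝ 𝔤)) z := by
    refine eqOn_exteriorPower_of_eq_ιMulti (fun x => ?_) hz
    have hε'_lower : ε' (C.lower ρ (n + 1) ω x) =
        Ψ (ceBoundary ℝ 𝔤 (ιMulti ℝ (n + 1) x)) := by
      rw [← dCE_linearMap_ιMulti, hψ]
      exact ε'_eq ⟨_, C.lower_mem_deg_zero ρ n ω hω x⟩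
    simp only [LinearMap.comp_apply, LinearMap.neg_apply, LinearMap.smul_apply, contractionAt_apply,
      contraction_ιMulti, map_neg, map_smul, hε'_lower]
  have hdeg : C.contraction ρ z ω ∈ C.deg 0 := by
    simpa using C.contraction_mem_deg ρ hω hz
  refine hεinj ⟨_, hdeg⟩ ?_ ?_
  · rw [C.d_contraction ρ hcl hinv, hcycle, map_zero, LinearMap.zero_apply]
  · rw [← ε'_eq]
    simpa [hcycle, contractionAt_apply] using hε'_contraction

end CartanCalculus

section MomentMap

open ExteriorAlgebra (ιMulti)

variable {C : CartanCalculus} {𝔤 : Type} [LieRing 𝔤] [LieAlgebra ℝ 𝔤] {ρ : 𝔤 →ₗ⁅ℝ⁆ C.X} {n : ℕ}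
  {ω : C.carrier}

theorem isMomentMap_of_nullHomotopy {f : ℕ → ExteriorAlgebra ℝ 𝔤 →ₗ[ℝ] C.carrier}
    (hdeg : ∀ (k : ℕ) (u), f k u ∈ C.deg ((n : ℤ) - (k : ℤ)))
    (hf : ∀ k, ∀ u ∈ ⋀[ℝ]^(k + 1) 𝔤,
      C.d (f (k + 1) u) + f k (ceBoundary ℝ 𝔤 u) = C.contraction ρ u ω) :
    IsMomentMap C ρ n ω fun k x => f k (ιMulti ℝ k x) := by
  have hmoment (k : ℕ) (x : Fin (k + 1) → 𝔤) :
      -dCE k (fun y => f k (ιMulti ℝ k y)) x =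
        C.d (f (k + 1) (ιMulti ℝ (k + 1) x)) +
          varsigma (k + 1) • C.lower ρ (k + 1) ω x := by
    have h := hf k _ (ιMulti_mem_exteriorPower (k + 1) x)
    rw [C.contraction_ιMulti, ← dCE_linearMap_ιMulti] at h
    rw [neg_eq_iff_add_eq_zero, ← add_assoc, add_comm (dCE k _ x), h, neg_add_cancel]
  refine ⟨fun k _ _ => ⟨isMultilinear_linearMap_ιMulti k (f k),
    isAlternating_linearMap_ιMulti k (f k), fun x => hdeg k _⟩, fun x => ?_, fun k hk _ x => ?_,
    fun x => ?_⟩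
  · have h := hmoment 0 fun _ => x
    rw [eq_neg_iff_add_eq_zero, eq_comm]
    simpa [dCE, varsigma, CartanCalculus.lower, CartanCalculus.iotaL] using h
  · obtain ⟨k, rfl⟩ : ∃ m, k = m + 1 := ⟨k - 1, by lia⟩
    exact (neg_dCE _ _ x).symm.trans (hmoment k x)
  · have htop : f (n + 1) (ιMulti ℝ (n + 1) x) = 0 := by
      simpa [C.deg_neg] using hdeg (n + 1) (ιMulti ℝ (n + 1) x)
    have h := hmoment n x
    rw [neg_dCE, htop, map_zero, zero_add] at h
    exact h

theorem contraction_mem_map_d_of_acyclic (hω : ω ∈ C.deg ((n : ℤ) + 1))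
    (hcl : C.d ω = 0) (hinv : ∀ x : 𝔤, C.L (ρ x) ω = 0) {k : ℕ}
    (hacyclic : IsCEAcyclicSucc 𝔤 k ∨ C.IsAcyclicAt ((n : ℤ) - (k : ℤ)))
    {z : ExteriorAlgebra ℝ 𝔤} (hz : z ∈ ⋀[ℝ]^(k + 1) 𝔤) (hcycle : ceBoundary ℝ 𝔤 z = 0) :
    C.contraction ρ z ω ∈ (C.deg ((n : ℤ) - (k : ℤ) - 1)).map C.d := by
  rcases hacyclic with hCE | hΩ
  · obtain ⟨w, hw, rfl⟩ := hCE.exists_ceBoundary_eq hz hcycle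
    have hdeg : C.contraction ρ w ω ∈ C.deg ((n : ℤ) - (k : ℤ) - 1) := by
      convert C.contraction_mem_deg ρ hω hw using 2
      push_cast
      ring
    exact ⟨_, hdeg, C.d_contraction ρ hcl hinv w⟩
  · have hdeg : C.contraction ρ z ω ∈ C.deg ((n : ℤ) - (k : ℤ)) := by
      simpa using C.contraction_mem_deg ρ hω hz
    exact hΩ _ hdeg (by rw [C.d_contraction ρ hcl hinv, hcycle, map_zero, LinearMap.zero_apply])

end MomentMap

theorem momentMap_exists_general (C : CartanCalculus) {𝔤 : Type} [LieRing 𝔤]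
    [LieAlgebra ℝ 𝔤] (ρ : 𝔤 →ₗ⁅ℝ⁆ C.X) (n : ℕ) (ω : C.carrier)
    (hω : ω ∈ C.deg ((n : ℤ) + 1)) (hcl : C.d ω = 0)
    (hinv : ∀ x : 𝔤, C.L (ρ x) ω = 0) (ε : C.deg 0 →ₗ[ℝ] ℝ)
    (hεinj : ∀ a : C.deg 0, C.d (a : C.carrier) = 0 → ε a = 0 → (a : C.carrier) = 0)
    (hvanish : ∀ j : ℕ, j + 1 ≤ n → IsCEAcyclicSucc 𝔤 j ∨ C.IsAcyclicAt ((n : ℤ) - (j : ℤ)))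
    (hcobound : ∃ ψ : (Fin n → 𝔤) → ℝ, IsMultilinear ψ ∧ IsAlternating ψ ∧
      ∀ x : Fin (n + 1) → 𝔤, dCE n ψ x = obstructionCocycle C ρ n ω hω ε x) :
    ∃ f : (k : ℕ) → (Fin k → 𝔤) → C.carrier, IsMomentMap C ρ n ω f := by
  obtain ⟨ψ, hψ_mul, hψ_alt, hψ⟩ := hcobound
  have hdeg (k : ℕ) (u) (hu : u ∈ ⋀[ℝ]^(k + 1) 𝔤) :
      C.contraction ρ u ω ∈ C.deg ((n : ℤ) - (k : ℤ)) := by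
    simpa using C.contraction_mem_deg ρ hω hu
  have hcycle (k : ℕ) (z) (hz : z ∈ ⋀[ℝ]^(k + 1) 𝔤) (hz_cycle : ceBoundary ℝ 𝔤 z = 0) :
      C.contraction ρ z ω ∈ (C.deg ((n : ℤ) - ((k + 1 : ℕ) : ℤ))).map C.d := by
    rcases lt_trichotomy k n with hlt | rfl | hgt
    · rw [Nat.cast_succ, ← sub_sub]
      exact contraction_mem_map_d_of_acyclic hω hcl hinv (hvanish k hlt) hz hz_cycle
    · rw [C.contraction_eq_zero_of_obstructionCocycle_eq_dCE ρ hω hcl hinv hεinj hψ_mul hψ_alt hψ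
        hz hz_cycle]
      exact zero_mem _
    · have hzero : C.contraction ρ z ω = 0 := by
        simpa [C.deg_neg ((n : ℤ) - k) (by lia)] using hdeg k z hz
      exact hzero ▸ zero_mem _
  obtain ⟨f, hf_deg, hf⟩ := exists_nullHomotopy (A := fun k => ⋀[ℝ]^k 𝔤)
    (B := fun k => C.deg ((n : ℤ) - (k : ℤ))) (φ := C.contractionAt ρ ω)
    (fun _ _ => ceBoundary_mem_exteriorPower) ceBoundary_ceBoundary hdeg
    (C.d_contraction ρ hcl hinv) hcycle
  exact ⟨_, isMomentMap_of_nullHomotopy hf_deg hf⟩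

/-- existence criterion, §5 of the paper. Assume `𝔤` is
finite-dimensional, `ε : Ω^0 → ℝ` restricts to a linear isomorphism
`ker(d : Ω^0 → Ω^1) ≅ ℝ`, for each `j = 1,…,n` (written `j+1`, `j+1 ≤ n`… with
`j` ranging so that `j+1 ∈ {1,…,n}`) one of `H^{j+1}_CE(𝔤)` and `H^{n-j}(Ω)`
vanishes (the vanishing of the tensor product `H^{j+1}_CE(𝔤) ⊗ H^{n-j}(Ω)` of
real vector spaces), and the obstruction cocycle `c` is a `d_𝔤`-coboundary.
Then a homotopy moment map for `ω` exists. -/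
theorem momentMap_exists (C : CartanCalculus) {𝔤 : Type} [LieRing 𝔤]
    [LieAlgebra ℝ 𝔤] [FiniteDimensional ℝ 𝔤] (ρ : 𝔤 →ₗ⁅ℝ⁆ C.X) (n : ℕ) (hn : 1 ≤ n)
    (ω : C.carrier) (hω : ω ∈ C.deg ((n : ℤ) + 1)) (hcl : C.d ω = 0)
    (hinv : ∀ x : 𝔤, C.L (ρ x) ω = 0)
    (ε : C.deg 0 →ₗ[ℝ] ℝ)
    (hεinj : ∀ a : C.deg 0, C.d (a : C.carrier) = 0 → ε a = 0 → (a : C.carrier) = 0)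
    (hεsurj : ∀ r : ℝ, ∃ a : C.deg 0, C.d (a : C.carrier) = 0 ∧ ε a = r)
    (hvanish : ∀ j : ℕ, j + 1 ≤ n →
      -- `H^{j+1}_CE(𝔤) = 0`: every alternating multilinear cocycle is a coboundary
      (∀ ψ : (Fin (j + 1) → 𝔤) → ℝ, IsMultilinear ψ → IsAlternating ψ →
        (∀ x : Fin (j + 2) → 𝔤, dCE (j + 1) ψ x = 0) →
        ∃ χ : (Fin j → 𝔤) → ℝ, IsMultilinear χ ∧ IsAlternating χ ∧
          ∀ x : Fin (j + 1) → 𝔤, dCE j χ x = ψ x) ∨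
      -- `H^{n-j}(Ω) = 0`: every closed element of `Ω^{n-j}` is exact
      (∀ a : C.carrier, a ∈ C.deg ((n : ℤ) - (j : ℤ)) → C.d a = 0 →
        ∃ b : C.carrier, b ∈ C.deg ((n : ℤ) - (j : ℤ) - 1) ∧ C.d b = a))
    (hcobound : ∃ ψ : (Fin n → 𝔤) → ℝ, IsMultilinear ψ ∧ IsAlternating ψ ∧
      ∀ x : Fin (n + 1) → 𝔤, dCE n ψ x = obstructionCocycle C ρ n ω hω ε x) :
    ∃ f : (k : ℕ) → (Fin k → 𝔤) → C.carrier, IsMomentMap C ρ n ω f :=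
  momentMap_exists_general C ρ n ω hω hcl hinv ε hεinj hvanish hcobound
end

section
/- (Equivalent Cartan cocycles induce equivalent moment maps) Let n ≥ 1. For i = 0,1 let ω^i ∈ Ω^{n+1} be invariant with dω^i = 0, and let μ^i : 𝔤 → Ω^{n−1} be linear and equivariant with d(μ^i(x)) = −ι_{v_x}ω^i and ι_{v_x}(μ^i(x)) = 0 for all x ∈ 𝔤. Suppose there exist an invariant α ∈ Ω^n and a linear equivariant F : 𝔤 → Ω^{n−2} such that ω^1 − ω^0 = dα, μ^1(x) − μ^0(x) = ι_{v_x}α − d(F(x)) for all x ∈ 𝔤, and ι_{v_x}(F(x)) = 0 for all x ∈ 𝔤. Then for every 1 ≤ k ≤ n and all x_1,…,x_k ∈ 𝔤: (μ^1)_k(x_1,…,x_k) − (μ^0)_k(x_1,…,x_k) = (−1)^{k−1}·α_k(x_1,…,x_k) + (d_𝔤F_{k−1})(x_1,…,x_k) + (−1)^k·d(F_k(x_1,…,x_k)) (with F_0 := 0); that is, (μ^1)~ − (μ^0)~ = α̃ + d_tot F̃, so the homotopy moment maps induced by μ^0 and μ^1 are equivalent via η := F̃ and α. -/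
/-!
Call `F : 𝔤 → Ω` skew when `ι_{v_x} (F y)` is skew in `x, y`. By anticommutation of contractions
the last argument of `F_k` can then be moved to the front:
`F_k(x₁,…,x_k) = (-1)^{k-1} ι(v_{x₂} ∧ ⋯ ∧ v_{x_k}) (F x₁)`.
The map `x ↦ ι_{v_x} α` is skew for every `α`, and if `F` is skew and equivariant, then
`x ↦ d (F x)` is again skew because `ι_{v_x} d = 𝓛_{v_x} - d ι_{v_x}`. With the
distinguished argument in front, the Cartan formula for multiple contractions, applied to `F x₁`,
reads `d_𝔤 F_k = (-1)^k d F_{k+1} - (d ∘ F)_{k+1}`; insert this into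
`μ¹ - μ⁰ = ι α - d ∘ F`.
-/

section BracketSum

variable {𝔤 W : Type*} [LieRing 𝔤] [AddCommGroup W] [Module ℝ W]

/-- The sum `Σ_{i<j} (-1)^{i+j} φ([x_i,x_j], x₁,…,x̂_i,…,x̂_j,…,x_k)` defining the
Chevalley–Eilenberg differential. The cochain `φ` takes the bracket and the list of remaining
arguments separately, so that it is not tied to a fixed number of arguments. -/
noncomputable def bracketSum (φ : 𝔤 → List 𝔤 → W) {k : ℕ} (x : Fin k → 𝔤) : W :=
  ∑ i : Fin k, ∑ j : Fin k,
    if (i : ℕ) < (j : ℕ) then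
      ((-1 : ℝ) ^ ((i : ℕ) + (j : ℕ))) •
        φ ⁅x i, x j⁆ (((List.ofFn x).eraseIdx (j : ℕ)).eraseIdx (i : ℕ))
    else 0

lemma bracketSum_neg (φ : 𝔤 → List 𝔤 → W) {k : ℕ} (x : Fin k → 𝔤) :
    bracketSum (fun b m => -φ b m) x = -bracketSum φ x := by
  simp only [bracketSum, smul_neg, ← Finset.sum_neg_distrib, neg_ite, neg_zero]

lemma bracketSum_succ (φ : 𝔤 → List 𝔤 → W) {k : ℕ} (x : Fin (k + 1) → 𝔤) :
    bracketSum φ x =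
      ∑ j : Fin k, ((-1 : ℝ) ^ ((j : ℕ) + 1)) •
          φ ⁅x 0, x j.succ⁆ ((List.ofFn (Fin.tail x)).eraseIdx (j : ℕ)) +
        bracketSum (fun b m => φ b (x 0 :: m)) (Fin.tail x) := by
  have sign_shift (i j : ℕ) : (-1 : ℝ) ^ (i + 1 + (j + 1)) = (-1) ^ (i + j) := by ring
  simp [bracketSum, Fin.sum_univ_succ, List.ofFn_succ, sign_shift, Fin.tail_def]

end BracketSum

lemma length_eraseIdx_eraseIdx_ofFn {α : Type*} {k : ℕ} (x : Fin (k + 1) → α) {i j : Fin (k + 1)}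
    (hij : (i : ℕ) < j) :
    (((List.ofFn x).eraseIdx j).eraseIdx i).length + 1 = k := by
  grind [List.length_eraseIdx, List.length_ofFn]

lemma dCE_eq_smul_bracketSum {𝔤 W : Type} [LieRing 𝔤] [LieAlgebra ℝ 𝔤] [AddCommGroup W]
    [Module ℝ W] {k : ℕ} {ψ : (Fin k → 𝔤) → W} {φ : 𝔤 → List 𝔤 → W} {c : ℝ}
    (hψ : ∀ b m, m.length + 1 = k → ψ (listToFun k (b :: m)) = c • φ b m)
    (x : Fin (k + 1) → 𝔤) :
    dCE k ψ x = c • bracketSum φ x := by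
  simp only [dCE, bracketSum, Finset.smul_sum]
  refine Finset.sum_congr rfl fun i _ => Finset.sum_congr rfl fun j _ => ?_
  split_ifs with hij
  · rw [hψ _ _ (length_eraseIdx_eraseIdx_ofFn x hij), smul_comm]
  · rw [smul_zero]

lemma ofFn_listToFun {α : Type} [Zero α] (l : List α) :
    List.ofFn (listToFun l.length l) = l :=
  List.ext_getElem (by simp) fun i _ hi => by simp [listToFun, hi]

namespace CartanCalculus

variable {C : CartanCalculus} {𝔤 : Type} [LieRing 𝔤] [LieAlgebra ℝ 𝔤] {ρ : 𝔤 →ₗ⁅ℝ⁆ C.X}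

variable (ρ) in
/-- The iterated contraction `ι(v_{x₁} ∧ ⋯ ∧ v_{x_k})` along a list in `𝔤`; unlike `lower` it
accepts the lists with omitted entries produced by `bracketSum`. -/
def contract (l : List 𝔤) : C.carrier →ₗ[ℝ] C.carrier :=
  C.iotaL (l.map ρ)

lemma contract_cons (x : 𝔤) (l : List 𝔤) (a : C.carrier) :
    contract ρ (x :: l) a = contract ρ l (C.ι (ρ x) a) :=
  rfl

lemma lower_eq_contract {k : ℕ} (σ : C.carrier) (x : Fin k → 𝔤) :
    C.lower ρ k σ x = contract ρ (List.ofFn x) σ := by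
  rw [lower, contract, List.map_ofFn]
  rfl

lemma lower_succ {k : ℕ} (σ : C.carrier) (x : Fin (k + 1) → 𝔤) :
    C.lower ρ (k + 1) σ x = C.lower ρ k (C.ι (ρ (x 0)) σ) (Fin.tail x) := by
  simp only [lower_eq_contract, List.ofFn_succ, contract_cons, Fin.tail_def]

lemma d_ι (v : C.X) (a : C.carrier) : C.d (C.ι v a) = C.L v a - C.ι v (C.d a) := by
  simp [L]

lemma ι_L (v w : C.X) (a : C.carrier) :
    C.ι w (C.L v a) = C.L v (C.ι w a) + C.ι ⁅w, v⁆ a := by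
  rw [← lie_skew w v, map_neg, LinearMap.neg_apply, ← C.cartan v w a]
  simp [L]

lemma sum_contract_L_succ {k : ℕ} (x : Fin (k + 1) → 𝔤) (a : C.carrier) :
    ∑ i : Fin (k + 1), ((-1 : ℝ) ^ ((i : ℕ) + 1)) •
        contract ρ ((List.ofFn x).eraseIdx i) (C.L (ρ (x i)) a) =
      -C.lower ρ k (C.L (ρ (x 0)) a) (Fin.tail x) -
        (∑ i : Fin k, ((-1 : ℝ) ^ ((i : ℕ) + 1)) •
            contract ρ ((List.ofFn (Fin.tail x)).eraseIdx i)
              (C.L (ρ (Fin.tail x i)) (C.ι (ρ (x 0)) a)) +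
          ∑ i : Fin k, ((-1 : ℝ) ^ ((i : ℕ) + 1)) •
            contract ρ ((List.ofFn (Fin.tail x)).eraseIdx i) (C.ι (ρ ⁅x 0, x i.succ⁆) a)) := by
  rw [Fin.sum_univ_succ, ← Finset.sum_add_distrib, sub_eq_add_neg, ← Finset.sum_neg_distrib]
  congr 1
  · simp [List.ofFn_succ, lower_eq_contract, Fin.tail_def]
  · refine Finset.sum_congr rfl fun i _ => ?_
    rw [← smul_add, ← map_add, LieHom.map_lie, Fin.tail_def, ← ι_L, Fin.val_succ, pow_succ,
      mul_neg_one, neg_smul, List.ofFn_succ, List.eraseIdx_cons_succ, contract_cons]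

theorem d_lower {k : ℕ} (x : Fin k → 𝔤) (a : C.carrier) :
    ((-1 : ℝ) ^ k) • C.d (C.lower ρ k a x) =
      C.lower ρ k (C.d a) x + bracketSum (fun b m => contract ρ m (C.ι (ρ b) a)) x +
        ∑ i : Fin k, ((-1 : ℝ) ^ ((i : ℕ) + 1)) •
          contract ρ ((List.ofFn x).eraseIdx i) (C.L (ρ (x i)) a) := by
  induction k generalizing a with
  | zero => simp [lower, iotaL, bracketSum]
  | succ k ih =>
    have bracketSum_swap :
        bracketSum (fun b m => contract ρ (x 0 :: m) (C.ι (ρ b) a)) (Fin.tail x) =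
          -bracketSum (fun b m => contract ρ m (C.ι (ρ b) (C.ι (ρ (x 0)) a))) (Fin.tail x) := by
      simp only [contract_cons, C.ι_ι (ρ (x 0)), map_neg, bracketSum_neg]
    have lower_d_ι : C.lower ρ k (C.d (C.ι (ρ (x 0)) a)) (Fin.tail x) =
        C.lower ρ k (C.L (ρ (x 0)) a) (Fin.tail x) - C.lower ρ (k + 1) (C.d a) x := by
      simp only [lower_succ, lower_eq_contract, d_ι, map_sub]
    rw [bracketSum_succ, bracketSum_swap, sum_contract_L_succ, lower_succ a, pow_succ,
      mul_neg_one, neg_smul, ih, lower_d_ι]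
    abel

variable (ρ) in
/-- Skew-symmetry of `(x, y) ↦ ι_{v_x} (F y)`: the polarised form of `ι_{v_x} (F x) = 0`, which
makes the cochains `F_k` alternating. -/
def IsSkew (F : 𝔤 → C.carrier) : Prop :=
  ∀ x y, C.ι (ρ x) (F y) = -C.ι (ρ y) (F x)

lemma isSkew_of_ι_self_eq_zero {F : 𝔤 →ₗ[ℝ] C.carrier} (hF : ∀ x, C.ι (ρ x) (F x) = 0) :
    IsSkew ρ F := by
  have alternating : ((C.ι ∘ₗ (ρ : 𝔤 →ₗ[ℝ] C.X)).compl₂ F).IsAlt := hF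
  exact fun x y => (alternating.neg y x).symm

lemma isSkew_ι (a : C.carrier) : IsSkew ρ fun x => C.ι (ρ x) a :=
  fun x y => C.ι_ι (ρ x) (ρ y) a

lemma IsSkew.d_comp {F : 𝔤 →ₗ[ℝ] C.carrier} (hskew : IsSkew ρ F)
    (hequiv : ∀ x y, C.L (ρ x) (F y) = F ⁅x, y⁆) :
    IsSkew ρ fun x => C.d (F x) := by
  have ι_d (x y : 𝔤) : C.ι (ρ x) (C.d (F y)) = F ⁅x, y⁆ - C.d (C.ι (ρ x) (F y)) := by
    rw [d_ι, hequiv, sub_sub_cancel]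
  intro x y
  rw [ι_d, ι_d, hskew x y, ← lie_skew, map_neg, map_neg]
  abel

lemma lowerF_sub (F G : 𝔤 → C.carrier) (k : ℕ) (x : Fin k → 𝔤) :
    C.lowerF ρ (F - G) k x = C.lowerF ρ F k x - C.lowerF ρ G k x := by
  cases k <;> simp [lowerF]

lemma lowerF_succ_succ (F : 𝔤 → C.carrier) {k : ℕ} (x : Fin (k + 2) → 𝔤) :
    C.lowerF ρ F (k + 2) x =
      C.lowerF ρ (fun y => C.ι (ρ (x 0)) (F y)) (k + 1) (Fin.tail x) := by
  simp [lowerF, iotaL, List.ofFn_succ, Fin.tail_def]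

lemma IsSkew.lowerF_succ {F : 𝔤 → C.carrier} (hF : IsSkew ρ F) {k : ℕ} (x : Fin (k + 1) → 𝔤) :
    C.lowerF ρ F (k + 1) x = ((-1 : ℝ) ^ k) • C.lower ρ k (F (x 0)) (Fin.tail x) := by
  induction k generalizing F with
  | zero => simp [lowerF, lower]
  | succ k ih =>
    calc C.lowerF ρ F (k + 2) x
        = C.lowerF ρ (fun y => C.ι (ρ (x 0)) (F y)) (k + 1) (Fin.tail x) := lowerF_succ_succ F x
      _ = -C.lowerF ρ (fun y => C.ι (ρ y) (F (x 0))) (k + 1) (Fin.tail x) := by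
          simp only [hF (x 0), lowerF, map_neg]
      _ = -(((-1 : ℝ) ^ k) •
            C.lower ρ k (C.ι (ρ (x 1)) (F (x 0))) (Fin.tail (Fin.tail x))) := by
          rw [ih (isSkew_ι (F (x 0)))]; rfl
      _ = ((-1 : ℝ) ^ (k + 1)) • C.lower ρ (k + 1) (F (x 0)) (Fin.tail x) := by
          rw [lower_succ, pow_succ, mul_neg_one, neg_smul]; rfl

lemma lowerF_ι (α : C.carrier) {k : ℕ} (x : Fin (k + 1) → 𝔤) :
    C.lowerF ρ (fun y => C.ι (ρ y) α) (k + 1) x = ((-1 : ℝ) ^ k) • C.lower ρ (k + 1) α x := by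
  rw [(isSkew_ι α).lowerF_succ, lower_succ]

lemma IsSkew.lowerF_listToFun_cons {F : 𝔤 → C.carrier} (hF : IsSkew ρ F) (b : 𝔤) (m : List 𝔤) :
    C.lowerF ρ F (m.length + 1) (listToFun (m.length + 1) (b :: m)) =
      ((-1 : ℝ) ^ m.length) • contract ρ m (F b) := by
  have tail_eq : Fin.tail (listToFun (m.length + 1) (b :: m)) = listToFun m.length m := rfl
  rw [hF.lowerF_succ, lower_eq_contract, tail_eq, ofFn_listToFun]
  rfl

lemma IsSkew.dCE_lowerF_eq_bracketSum {F : 𝔤 → C.carrier} (hF : IsSkew ρ F) {k : ℕ}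
    (x : Fin (k + 1) → 𝔤) :
    dCE k (C.lowerF ρ F k) x =
      ((-1 : ℝ) ^ (k + 1)) • bracketSum (fun b m => contract ρ m (F b)) x := by
  refine dCE_eq_smul_bracketSum (fun b m hm => ?_) x
  subst hm
  rw [hF.lowerF_listToFun_cons]
  congr 1
  ring

lemma IsSkew.bracketSum_contract {F : 𝔤 →ₗ[ℝ] C.carrier} (hskew : IsSkew ρ F)
    (hequiv : ∀ x y, C.L (ρ x) (F y) = F ⁅x, y⁆) {k : ℕ} (x : Fin (k + 1) → 𝔤) :
    bracketSum (fun b m => contract ρ m (F b)) x =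
      C.lower ρ k (C.d (F (x 0))) (Fin.tail x) -
        ((-1 : ℝ) ^ k) • C.d (C.lower ρ k (F (x 0)) (Fin.tail x)) := by
  have bracketSum_swap :
      bracketSum (fun b m => contract ρ (x 0 :: m) (F b)) (Fin.tail x) =
        -bracketSum (fun b m => contract ρ m (C.ι (ρ b) (F (x 0)))) (Fin.tail x) := by
    simp only [contract_cons, hskew (x 0), map_neg, bracketSum_neg]
  have lie_sum_eq :
      ∑ i : Fin k, ((-1 : ℝ) ^ ((i : ℕ) + 1)) •
          contract ρ ((List.ofFn (Fin.tail x)).eraseIdx i) (C.L (ρ (Fin.tail x i)) (F (x 0))) =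
        -∑ i : Fin k, ((-1 : ℝ) ^ ((i : ℕ) + 1)) •
          contract ρ ((List.ofFn (Fin.tail x)).eraseIdx i) (F ⁅x 0, x i.succ⁆) := by
    simp only [hequiv, ← lie_skew (x 0), map_neg, smul_neg, Finset.sum_neg_distrib, neg_neg,
      Fin.tail_def]
  rw [bracketSum_succ, bracketSum_swap, d_lower, lie_sum_eq]
  abel

lemma IsSkew.dCE_lowerF {F : 𝔤 →ₗ[ℝ] C.carrier} (hskew : IsSkew ρ F)
    (hequiv : ∀ x y, C.L (ρ x) (F y) = F ⁅x, y⁆) {k : ℕ} (x : Fin (k + 1) → 𝔤) :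
    dCE k (C.lowerF ρ F k) x =
      ((-1 : ℝ) ^ k) • C.d (C.lowerF ρ F (k + 1) x) -
        C.lowerF ρ (fun y => C.d (F y)) (k + 1) x := by
  rw [hskew.dCE_lowerF_eq_bracketSum, hskew.bracketSum_contract hequiv,
    hskew.lowerF_succ, (hskew.d_comp hequiv).lowerF_succ, map_smul]
  module

end CartanCalculus

theorem equivalent_cartan_cocycles_general (C : CartanCalculus) {𝔤 : Type} [LieRing 𝔤]
    [LieAlgebra ℝ 𝔤] (ρ : 𝔤 →ₗ⁅ℝ⁆ C.X) (μ0 μ1 : 𝔤 → C.carrier) (α : C.carrier)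
    (F : 𝔤 →ₗ[ℝ] C.carrier) (hFequiv : ∀ x y : 𝔤, C.L (ρ x) (F y) = F ⁅x, y⁆)
    (hb : ∀ x : 𝔤, μ1 x - μ0 x = C.ι (ρ x) α - C.d (F x))
    (hc : ∀ x : 𝔤, C.ι (ρ x) (F x) = 0) (k : ℕ) (x : Fin (k + 1) → 𝔤) :
    C.lowerF ρ μ1 (k + 1) x - C.lowerF ρ μ0 (k + 1) x
      = ((-1 : ℝ) ^ k) • C.lower ρ (k + 1) α x
        + dCE k (C.lowerF ρ F k) x
        + ((-1 : ℝ) ^ (k + 1)) • C.d (C.lowerF ρ F (k + 1) x) := by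
  have μ_sub : μ1 - μ0 = (fun y => C.ι (ρ y) α) - fun y => C.d (F y) := funext hb
  rw [← CartanCalculus.lowerF_sub, μ_sub, CartanCalculus.lowerF_sub, CartanCalculus.lowerF_ι,
    (CartanCalculus.isSkew_of_ι_self_eq_zero hc).dCE_lowerF hFequiv]
  module

/-- equivalent Cartan cocycles induce equivalent moment maps,
Prop. 6.9 of the paper. If the Cartan cocycles `ω^i - μ^i` (`i = 0,1`) differ
by `d_G(α + F)` — i.e. `ω¹ - ω⁰ = dα`, `μ¹ x - μ⁰ x = ι_{v_x}α - d(F x)` and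
`ι_{v_x}(F x) = 0` — then for every `1 ≤ k ≤ n` (written `k+1` with `k+1 ≤ n`):
`(μ¹)_{k+1} - (μ⁰)_{k+1} = (-1)^k α_{k+1} + d_𝔤 F_k + (-1)^{k+1} d F_{k+1}`
(with `F₀ := 0`); i.e. `(μ¹)~ - (μ⁰)~ = α̃ + d_tot F̃`, so the induced homotopy
moment maps are equivalent via `η := F̃` and `α`. -/
theorem equivalent_cartan_cocycles (C : CartanCalculus) {𝔤 : Type} [LieRing 𝔤]
    [LieAlgebra ℝ 𝔤] (ρ : 𝔤 →ₗ⁅ℝ⁆ C.X) (n : ℕ) (hn : 1 ≤ n)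
    (ω0 ω1 : C.carrier)
    (hω0 : ω0 ∈ C.deg ((n : ℤ) + 1)) (hω1 : ω1 ∈ C.deg ((n : ℤ) + 1))
    (hcl0 : C.d ω0 = 0) (hcl1 : C.d ω1 = 0)
    (hinv0 : ∀ x : 𝔤, C.L (ρ x) ω0 = 0) (hinv1 : ∀ x : 𝔤, C.L (ρ x) ω1 = 0)
    (μ0 μ1 : 𝔤 →ₗ[ℝ] C.carrier)
    (hμdeg0 : ∀ x : 𝔤, μ0 x ∈ C.deg ((n : ℤ) - 1))
    (hμdeg1 : ∀ x : 𝔤, μ1 x ∈ C.deg ((n : ℤ) - 1))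
    (hμequiv0 : ∀ x y : 𝔤, C.L (ρ x) (μ0 y) = μ0 ⁅x, y⁆)
    (hμequiv1 : ∀ x y : 𝔤, C.L (ρ x) (μ1 y) = μ1 ⁅x, y⁆)
    (hμmom0 : ∀ x : 𝔤, C.d (μ0 x) = - C.ι (ρ x) ω0)
    (hμmom1 : ∀ x : 𝔤, C.d (μ1 x) = - C.ι (ρ x) ω1)
    (hμvan0 : ∀ x : 𝔤, C.ι (ρ x) (μ0 x) = 0)
    (hμvan1 : ∀ x : 𝔤, C.ι (ρ x) (μ1 x) = 0)
    (α : C.carrier) (hαdeg : α ∈ C.deg (n : ℤ)) (hαinv : ∀ x : 𝔤, C.L (ρ x) α = 0)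
    (F : 𝔤 →ₗ[ℝ] C.carrier) (hFdeg : ∀ x : 𝔤, F x ∈ C.deg ((n : ℤ) - 2))
    (hFequiv : ∀ x y : 𝔤, C.L (ρ x) (F y) = F ⁅x, y⁆)
    (ha : ω1 - ω0 = C.d α)
    (hb : ∀ x : 𝔤, μ1 x - μ0 x = C.ι (ρ x) α - C.d (F x))
    (hc : ∀ x : 𝔤, C.ι (ρ x) (F x) = 0) :
    ∀ k : ℕ, k + 1 ≤ n → ∀ x : Fin (k + 1) → 𝔤,
      C.lowerF ρ (fun y => μ1 y) (k + 1) x - C.lowerF ρ (fun y => μ0 y) (k + 1) x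
        = ((-1 : ℝ) ^ k) • C.lower ρ (k + 1) α x
          + dCE k (C.lowerF ρ (fun y => F y) k) x
          + ((-1 : ℝ) ^ (k + 1)) • C.d (C.lowerF ρ (fun y => F y) (k + 1) x) := by
  exact fun k _ x => equivalent_cartan_cocycles_general C ρ μ0 μ1 α F hFequiv hb hc k x
end
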